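/- arXiv:math/0502056 — 5 statements merged into one kernel-verified Lean document; each statement's English description precedes it below -/
import Mathlib

section
/- Consider SO(n)/SO(2)×SO(n−3) as a 4-symmetric space with its unique canonical f-structure f₀. For s, t > 0, f₀ satisfies the NKf condition for (s,t) — that is, (1/2)[f₀X, f₀²X]_𝔪 + U_{s,t}(f₀X, f₀²X) − f₀(U_{s,t}(f₀X, f₀X)) = 0 for all X ∈ 𝔪 — if and only if s = 1 (with t > 0 arbitrary). In other words, f₀ is a nearly Kähler f-structure exactly for the invariant Riemannian metrics with characteristic numbers (1, t), t > 0. -/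
open Matrix

namespace FlagMfld

variable {n : ℕ}

/-- Membership in `so(n)`: real skew-symmetric `n×n` matrices. -/
def inSO (X : Matrix (Fin n) (Fin n) ℝ) : Prop := Xᵀ = -X

/-- The isotropy subalgebra `𝔥 ≅ so(2) ⊕ so(n-3)`: skew matrices whose only (possibly)
nonzero entries are `H₂₃`, `H₃₂` and `H_{ij}` with `i,j ≥ 4` (1-based indexing; indices are
0-based in the formalization, so the allowed positions are `(1,2)`, `(2,1)` and `i,j ≥ 3`). -/
def inH (X : Matrix (Fin n) (Fin n) ℝ) : Prop :=
  Xᵀ = -X ∧ ∀ i j : Fin n, X i j ≠ 0 →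
    (i.val = 1 ∧ j.val = 2) ∨ (i.val = 2 ∧ j.val = 1) ∨ (3 ≤ i.val ∧ 3 ≤ j.val)

/-- The canonical reductive complement `𝔪`: skew matrices with `S₂₃ = 0` and `S_{ij} = 0`
for all `i,j ≥ 4` (1-based). -/
def inM (X : Matrix (Fin n) (Fin n) ℝ) : Prop :=
  Xᵀ = -X ∧ (∀ i j : Fin n, i.val = 1 → j.val = 2 → X i j = 0) ∧
    ∀ i j : Fin n, 3 ≤ i.val → 3 ≤ j.val → X i j = 0

/-- `𝔪₁`: only `S₁₂`, `S₁₃` (and skew partners) may be nonzero. -/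
def inM1 (X : Matrix (Fin n) (Fin n) ℝ) : Prop :=
  Xᵀ = -X ∧ ∀ i j : Fin n, X i j ≠ 0 →
    (i.val = 0 ∧ (j.val = 1 ∨ j.val = 2)) ∨ (j.val = 0 ∧ (i.val = 1 ∨ i.val = 2))

/-- `𝔪₂`: only `S_{2j}`, `S_{3j}` for `j ≥ 4` (and skew partners) may be nonzero. -/
def inM2 (X : Matrix (Fin n) (Fin n) ℝ) : Prop :=
  Xᵀ = -X ∧ ∀ i j : Fin n, X i j ≠ 0 →
    ((i.val = 1 ∨ i.val = 2) ∧ 3 ≤ j.val) ∨ ((j.val = 1 ∨ j.val = 2) ∧ 3 ≤ i.val)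

/-- `𝔪₃`: only `S_{1j}` for `j ≥ 4` (and skew partners) may be nonzero. -/
def inM3 (X : Matrix (Fin n) (Fin n) ℝ) : Prop :=
  Xᵀ = -X ∧ ∀ i j : Fin n, X i j ≠ 0 →
    (i.val = 0 ∧ 3 ≤ j.val) ∨ (j.val = 0 ∧ 3 ≤ i.val)

/-- Component along `𝔪₁` of the decomposition `𝔪 = 𝔪₁ ⊕ 𝔪₂ ⊕ 𝔪₃` (entrywise). -/
def p1 (X : Matrix (Fin n) (Fin n) ℝ) : Matrix (Fin n) (Fin n) ℝ :=
  Matrix.of fun i j =>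
    if (i.val = 0 ∧ (j.val = 1 ∨ j.val = 2)) ∨ (j.val = 0 ∧ (i.val = 1 ∨ i.val = 2))
    then X i j else 0

/-- Component along `𝔪₂`. -/
def p2 (X : Matrix (Fin n) (Fin n) ℝ) : Matrix (Fin n) (Fin n) ℝ :=
  Matrix.of fun i j =>
    if ((i.val = 1 ∨ i.val = 2) ∧ 3 ≤ j.val) ∨ ((j.val = 1 ∨ j.val = 2) ∧ 3 ≤ i.val)
    then X i j else 0

/-- Component along `𝔪₃`. -/
def p3 (X : Matrix (Fin n) (Fin n) ℝ) : Matrix (Fin n) (Fin n) ℝ :=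
  Matrix.of fun i j =>
    if (i.val = 0 ∧ 3 ≤ j.val) ∨ (j.val = 0 ∧ 3 ≤ i.val) then X i j else 0

/-- Projection of `so(n)` onto `𝔪` along `𝔥` (kills the entries at `𝔥`-positions). -/
def pM (X : Matrix (Fin n) (Fin n) ℝ) : Matrix (Fin n) (Fin n) ℝ :=
  Matrix.of fun i j =>
    if (i.val = 1 ∧ j.val = 2) ∨ (i.val = 2 ∧ j.val = 1) ∨ (3 ≤ i.val ∧ 3 ≤ j.val)
    then 0 else X i j

/-- Matrix commutator `[X,Y] = XY - YX`. -/
def br (X Y : Matrix (Fin n) (Fin n) ℝ) : Matrix (Fin n) (Fin n) ℝ := X * Y - Y * X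

/-- The naturally reductive metric `g₀(X,Y) = (n-1)·Tr(XᵀY)`. -/
noncomputable def g0 (X Y : Matrix (Fin n) (Fin n) ℝ) : ℝ :=
  ((n : ℝ) - 1) * (Xᵀ * Y).trace

/-- The invariant metric with characteristic numbers `(s,t)`:
`g_{s,t}(X,Y) = g₀(X₁,Y₁) + s·g₀(X₂,Y₂) + t·g₀(X₃,Y₃)`. -/
noncomputable def gst (s t : ℝ) (X Y : Matrix (Fin n) (Fin n) ℝ) : ℝ :=
  g0 (p1 X) (p1 Y) + s * g0 (p2 X) (p2 Y) + t * g0 (p3 X) (p3 Y)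

/-- The symmetric part `U_{s,t}` of the Nomizu function of the Levi-Civita connection of
`g_{s,t}`. -/
noncomputable def Ust (s t : ℝ) (X Y : Matrix (Fin n) (Fin n) ℝ) :
    Matrix (Fin n) (Fin n) ℝ :=
  ((t - s) / 2) • (br (p2 X) (p3 Y) + br (p2 Y) (p3 X)) +
  ((t - 1) / (2 * s)) • (br (p1 X) (p3 Y) + br (p1 Y) (p3 X)) +
  ((s - 1) / (2 * t)) • (br (p1 X) (p2 Y) + br (p1 Y) (p2 X))

/-- The block-diagonal matrix `B₄ = diag(1, [[0,1],[-1,0]], -1, …, -1)`. -/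
def B4 : Matrix (Fin n) (Fin n) ℝ :=
  Matrix.of fun i j =>
    if i.val = 0 ∧ j.val = 0 then 1
    else if i.val = 1 ∧ j.val = 2 then 1
    else if i.val = 2 ∧ j.val = 1 then -1
    else if 3 ≤ i.val ∧ i = j then -1
    else 0

/-- `θ = dΦ|𝔪` for the order-4 automorphism: `θ(X) = B₄ X B₄ᵀ`. -/
def th4 (X : Matrix (Fin n) (Fin n) ℝ) : Matrix (Fin n) (Fin n) ℝ := B4 * X * B4ᵀ

/-- The canonical f-structure `f₀ = (1/2)(θ - θ³)` of the 4-symmetric space. -/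
noncomputable def f0 (X : Matrix (Fin n) (Fin n) ℝ) : Matrix (Fin n) (Fin n) ℝ :=
  (1 / 2 : ℝ) • (th4 X - th4 (th4 (th4 X)))

/-- The block-diagonal matrix `B₆ = diag(1, [[1/2,√3/2],[-√3/2,1/2]], -1, …, -1)`. -/
noncomputable def B6 : Matrix (Fin n) (Fin n) ℝ :=
  Matrix.of fun i j =>
    if i.val = 0 ∧ j.val = 0 then 1
    else if i.val = 1 ∧ j.val = 1 then 1 / 2
    else if i.val = 1 ∧ j.val = 2 then Real.sqrt 3 / 2
    else if i.val = 2 ∧ j.val = 1 then -(Real.sqrt 3 / 2)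
    else if i.val = 2 ∧ j.val = 2 then 1 / 2
    else if 3 ≤ i.val ∧ i = j then -1
    else 0

/-- `θ = dΦ|𝔪` for the order-6 automorphism: `θ(X) = B₆ X B₆ᵀ`. -/
noncomputable def th6 (X : Matrix (Fin n) (Fin n) ℝ) : Matrix (Fin n) (Fin n) ℝ :=
  B6 * X * B6ᵀ

/-- `f₁ = (1/√3)(θ - θ⁵)`. -/
noncomputable def f1 (X : Matrix (Fin n) (Fin n) ℝ) : Matrix (Fin n) (Fin n) ℝ :=
  (1 / Real.sqrt 3) • (th6 X - th6 (th6 (th6 (th6 (th6 X)))))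

/-- `f₂ = (1/(2√3))(θ - θ² + θ⁴ - θ⁵)`. -/
noncomputable def f2 (X : Matrix (Fin n) (Fin n) ℝ) : Matrix (Fin n) (Fin n) ℝ :=
  (1 / (2 * Real.sqrt 3)) •
    (th6 X - th6 (th6 X) + th6 (th6 (th6 (th6 X))) - th6 (th6 (th6 (th6 (th6 X)))))

/-- `f₃ = (1/(2√3))(θ + θ² - θ⁴ - θ⁵)`. -/
noncomputable def f3 (X : Matrix (Fin n) (Fin n) ℝ) : Matrix (Fin n) (Fin n) ℝ :=
  (1 / (2 * Real.sqrt 3)) •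
    (th6 X + th6 (th6 X) - th6 (th6 (th6 (th6 X))) - th6 (th6 (th6 (th6 (th6 X)))))

/-- `f₄ = (1/√3)(θ² - θ⁴)`. -/
noncomputable def f4 (X : Matrix (Fin n) (Fin n) ℝ) : Matrix (Fin n) (Fin n) ℝ :=
  (1 / Real.sqrt 3) • (th6 (th6 X) - th6 (th6 (th6 (th6 X))))

/-- The Killing f-structure condition for `f` w.r.t. the metric with characteristic
numbers `(s,t)`: `(1/2)[X, fX]_𝔪 + U_{s,t}(X, fX) - f(U_{s,t}(X,X)) = 0` for all `X ∈ 𝔪`. -/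
def killCond (s t : ℝ) (f : Matrix (Fin n) (Fin n) ℝ → Matrix (Fin n) (Fin n) ℝ) : Prop :=
  ∀ X : Matrix (Fin n) (Fin n) ℝ, inM X →
    (1 / 2 : ℝ) • pM (br X (f X)) + Ust s t X (f X) - f (Ust s t X X) = 0

/-- The nearly Kähler f-structure condition:
`(1/2)[fX, f²X]_𝔪 + U_{s,t}(fX, f²X) - f(U_{s,t}(fX, fX)) = 0` for all `X ∈ 𝔪`. -/
def nkCond (s t : ℝ) (f : Matrix (Fin n) (Fin n) ℝ → Matrix (Fin n) (Fin n) ℝ) : Prop :=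
  ∀ X : Matrix (Fin n) (Fin n) ℝ, inM X →
    (1 / 2 : ℝ) • pM (br (f X) (f (f X))) + Ust s t (f X) (f (f X)) -
      f (Ust s t (f X) (f X)) = 0

/-- The `G₁f` condition:
`f(2·U_{s,t}(fX, f²X) - f(U_{s,t}(fX, fX)) + f(U_{s,t}(f²X, f²X))) = 0` for all `X ∈ 𝔪`. -/
def g1Cond (s t : ℝ) (f : Matrix (Fin n) (Fin n) ℝ → Matrix (Fin n) (Fin n) ℝ) : Prop :=
  ∀ X : Matrix (Fin n) (Fin n) ℝ, inM X →
    f ((2 : ℝ) • Ust s t (f X) (f (f X)) - f (Ust s t (f X) (f X)) +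
      f (Ust s t (f (f X)) (f (f X)))) = 0

end FlagMfld

open FlagMfld
namespace FlagMfld

def sgI {m : ℕ} (i : Fin (m+3)) : Fin (m+3) := if i = 1 then 2 else if i = 2 then 1 else i

def epI {m : ℕ} (i : Fin (m+3)) : ℝ := if i = 0 then 1 else if i = 1 then 1 else -1

/-- block indicator -/
def blI {m : ℕ} (i : Fin (m+3)) : ℝ := if i = 1 then -1 else if i = 2 then -1 else 1

theorem B4_eq {m : ℕ} (i j : Fin (m+3)) :
    (B4 : Matrix (Fin (m+3)) (Fin (m+3)) ℝ) i j = if sgI i = j then epI i else 0 := by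
  have h1 : ((1 : Fin (m+3)) : ℕ) = 1 := rfl
  have h2 : ((2 : Fin (m+3)) : ℕ) = 2 := rfl
  have h0 : ((0 : Fin (m+3)) : ℕ) = 0 := rfl
  simp only [B4, sgI, epI, Matrix.of_apply, Fin.ext_iff, apply_ite Fin.val, h0, h1, h2]
  split_ifs <;> first | rfl | (exfalso; omega)

theorem th4_apply {m : ℕ} (X : Matrix (Fin (m+3)) (Fin (m+3)) ℝ) (i j : Fin (m+3)) :
    th4 X i j = epI i * epI j * X (sgI i) (sgI j) := by
  simp only [th4, Matrix.mul_apply, Matrix.transpose_apply, B4_eq]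
  simp
  ring

theorem f0_apply {m : ℕ} (X : Matrix (Fin (m+3)) (Fin (m+3)) ℝ) (i j : Fin (m+3)) :
    f0 X i j = (1 - blI i * blI j) / 2 * (epI i * epI j * X (sgI i) (sgI j)) := by
  have h1 : ∀ i : Fin (m+3), sgI (sgI i) = i := by
    intro i; unfold sgI
    have : (2 : Fin (m+3)) ≠ 1 := by
      intro h; have h := congrArg Fin.val h
      rw [show ((2 : Fin (m+3)) : ℕ) = 2 from rfl, show ((1 : Fin (m+3)) : ℕ) = 1 from rfl] at h
      omega
    split_ifs <;> simp_all
  have h2 : ∀ i : Fin (m+3), epI (sgI i) * epI i = blI i := by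
    intro i; unfold sgI epI blI
    have : (2 : Fin (m+3)) ≠ 1 := by
      intro h; have h := congrArg Fin.val h
      rw [show ((2 : Fin (m+3)) : ℕ) = 2 from rfl, show ((1 : Fin (m+3)) : ℕ) = 1 from rfl] at h
      omega
    have : (2 : Fin (m+3)) ≠ 0 := by
      intro h; have h := congrArg Fin.val h
      rw [show ((2 : Fin (m+3)) : ℕ) = 2 from rfl, show ((0 : Fin (m+3)) : ℕ) = 0 from rfl] at h
      omega
    have : (1 : Fin (m+3)) ≠ 0 := by simp [Fin.ext_iff]
    split_ifs <;> simp_all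
  simp only [f0, Matrix.smul_apply, Matrix.sub_apply, th4_apply, h1, smul_eq_mul]
  rw [← h2 i, ← h2 j]; ring

theorem f0_skew {m : ℕ} {X : Matrix (Fin (m+3)) (Fin (m+3)) ℝ} (h : ∀ i j, X i j = - X j i)
    (i j : Fin (m+3)) : f0 X i j = - f0 X j i := by
  rw [f0_apply, f0_apply, h (sgI i)]; ring

theorem p3_f0 {m : ℕ} (X : Matrix (Fin (m+3)) (Fin (m+3)) ℝ) : p3 (f0 X) = 0 := by
  ext i j
  have h1 : ((1 : Fin (m+3)) : ℕ) = 1 := rfl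
  have h2 : ((2 : Fin (m+3)) : ℕ) = 2 := rfl
  simp only [p3, Matrix.of_apply, f0_apply, blI, Fin.ext_iff, h1, h2, Matrix.zero_apply]
  split_ifs <;> first | omega | simp

theorem Ust_f0 {m : ℕ} (s t : ℝ) (X Y : Matrix (Fin (m+3)) (Fin (m+3)) ℝ) :
    Ust s t (f0 X) (f0 Y) = ((s - 1) / (2 * t)) • (br (p1 (f0 X)) (p2 (f0 Y)) +
      br (p1 (f0 Y)) (p2 (f0 X))) := by
  simp [Ust, p3_f0, br]

theorem fin3_cases {m : ℕ} (i : Fin (m+3)) :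
    i = 0 ∨ i = 1 ∨ i = 2 ∨ ∃ k : Fin m, i = k.succ.succ.succ := by
  induction i using Fin.cases with
  | zero => simp
  | succ i =>
    induction i using Fin.cases with
    | zero => simp
    | succ i =>
      induction i using Fin.cases with
      | zero => right; right; left; rfl
      | succ i => right; right; right; exact ⟨i, rfl⟩

section vals
variable {m : ℕ} (k : Fin m)

theorem vals : sgI (0 : Fin (m+3)) = 0 ∧ sgI (1 : Fin (m+3)) = 2 ∧ sgI (2 : Fin (m+3)) = 1 ∧
    (∀ k : Fin m, sgI k.succ.succ.succ = k.succ.succ.succ) ∧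
    epI (0 : Fin (m+3)) = 1 ∧ epI (1 : Fin (m+3)) = 1 ∧ epI (2 : Fin (m+3)) = -1 ∧
    (∀ k : Fin m, epI k.succ.succ.succ = -1) ∧
    blI (0 : Fin (m+3)) = 1 ∧ blI (1 : Fin (m+3)) = -1 ∧ blI (2 : Fin (m+3)) = -1 ∧
    (∀ k : Fin m, blI k.succ.succ.succ = 1) := by
  have h1 : ((1 : Fin (m+3)) : ℕ) = 1 := rfl
  have h2 : ((2 : Fin (m+3)) : ℕ) = 2 := rfl
  have h3 : 2 % (m+3) = 2 := Nat.mod_eq_of_lt (by omega)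
  have h4 : 2 % (m+1+1+1) = 2 := h3
  simp [sgI, epI, blI, Fin.ext_iff, h3, h4]

end vals

theorem pM_br {m : ℕ} {X : Matrix (Fin (m+3)) (Fin (m+3)) ℝ} (h : ∀ i j, X i j = - X j i) :
    pM (br (f0 X) (f0 (f0 X))) = 0 := by
  obtain ⟨s0, s1, s2, s3, e0, e1, e2, e3, b0, b1, b2, b3⟩ := @vals m
  have q1 : (Fin.succ 0 : Fin (m+3)) = 1 := rfl
  have q2 : (Fin.succ (Fin.succ 0) : Fin (m+3)) = 2 := rfl
  have h1 : ((1 : Fin (m+3)) : ℕ) = 1 := rfl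
  have h2 : ((2 : Fin (m+3)) : ℕ) = 2 := rfl
  have hS : ∑ x : Fin m, X 2 x.succ.succ.succ * X x.succ.succ.succ 1 =
      ∑ x : Fin m, X 1 x.succ.succ.succ * X x.succ.succ.succ 2 := by
    refine Finset.sum_congr rfl fun x _ => ?_
    rw [h 2, h _ 1]; ring
  ext i j
  rcases fin3_cases i with rfl | rfl | rfl | ⟨a, rfl⟩ <;>
  rcases fin3_cases j with rfl | rfl | rfl | ⟨b, rfl⟩ <;>
  simp [pM, h1, h2, br, Matrix.mul_apply, Fin.sum_univ_succ, q1, q2, f0_apply, s0, s1, s2, s3,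
      e0, e1, e2, e3, b0, b1, b2, b3] <;> norm_num
  · rw [h 2 0, h 1 0]; ring
  · ring
  · rw [hS, h 2 0, h 1 0]; ring
  · intros; rw [hS, h 2 0, h 1 0]; ring
  · ring

theorem back {m : ℕ} {s t : ℝ} (ht : 0 < t) (H : nkCond (n := m+1+3) s t f0) : s = 1 := by
  obtain ⟨s0, s1, s2, s3, e0, e1, e2, e3, b0, b1, b2, b3⟩ := @vals (m+1)
  have q1 : (Fin.succ 0 : Fin (m+1+3)) = 1 := rfl
  have q2 : (Fin.succ (Fin.succ 0) : Fin (m+1+3)) = 2 := rfl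
  have h1 : ((1 : Fin (m+1+3)) : ℕ) = 1 := rfl
  have h2 : ((2 : Fin (m+1+3)) : ℕ) = 2 := rfl
  have h0 : ((0 : Fin (m+1+3)) : ℕ) = 0 := rfl
  let X : Matrix (Fin (m+1+3)) (Fin (m+1+3)) ℝ := Matrix.of fun i j =>
    if i.val = 1 ∧ j.val = 0 then 1 else if i.val = 0 ∧ j.val = 1 then -1
    else if i.val = 2 ∧ j.val = 3 then -1 else if i.val = 3 ∧ j.val = 2 then 1 else 0
  have hX : ∀ i j, X i j = - X j i := by
    intro i j
    simp only [X, Matrix.of_apply]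
    split_ifs <;> first | (exfalso; omega) | norm_num
  have hM : inM X := by
    refine ⟨?_, ?_, ?_⟩
    · ext i j
      exact hX j i
    · intro i j hi hj
      simp only [X, Matrix.of_apply]
      split_ifs <;> first | rfl | (exfalso; omega)
    · intro i j hi hj
      simp only [X, Matrix.of_apply]
      split_ifs <;> first | rfl | (exfalso; omega)
  let k : Fin (m+1+3) := (0 : Fin (m+1)).succ.succ.succ
  have hk : (k : ℕ) = 3 := rfl
  have E := congrFun (congrFun (H X hM) 0) k
  rw [pM_br hX, Ust_f0] at E
  simp only [Matrix.add_apply, Matrix.sub_apply, Matrix.smul_apply, Matrix.zero_apply,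
    f0_apply (Ust _ _ _ _), smul_eq_mul] at E
  have ek : epI k = -1 := e3 0
  have bk : blI k = 1 := b3 0
  have sk : sgI k = k := s3 0
  have x1 : X 0 1 = -1 := by simp only [X, Matrix.of_apply, h0, h1, h2, hk]; norm_num
  have x2 : X 2 k = -1 := by simp only [X, Matrix.of_apply, h0, h1, h2, hk]; norm_num
  have x3 : X 0 2 = 0 := by simp only [X, Matrix.of_apply, h0, h1, h2, hk]; norm_num
  have x4 : X 1 k = 0 := by simp only [X, Matrix.of_apply, h0, h1, h2, hk]; norm_num
  have r1 : f0 X 0 1 = 0 := by rw [f0_apply]; simp [s0, s1, x3]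
  have r2 : f0 X 0 2 = 1 := by rw [f0_apply, s0, s2, x1, e0, e2, b0, b2]; norm_num
  have r3 : f0 X 1 k = 1 := by rw [f0_apply, s1, sk, x2, e1, ek, b1, bk]; norm_num
  have r4 : f0 X 2 k = 0 := by rw [f0_apply, s2, sk, x4]; simp
  have t1 : f0 (f0 X) 0 1 = 1 := by rw [f0_apply, s0, s1, r2, e0, e1, b0, b1]; norm_num
  have t2 : f0 (f0 X) 0 2 = 0 := by rw [f0_apply, s0, s2, r1]; simp
  have t3 : f0 (f0 X) 1 k = 0 := by rw [f0_apply, s1, sk, r4]; simp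
  have t4 : f0 (f0 X) 2 k = 1 := by rw [f0_apply, s2, sk, r3, e2, ek, b2, bk]; norm_num
  have key : ∀ Y Z : Matrix (Fin (m+1+3)) (Fin (m+1+3)) ℝ,
      br (p1 Y) (p2 Z) 0 k = Y 0 1 * Z 1 k + Y 0 2 * Z 2 k := by
    intro Y Z
    have u : ∀ x : Fin (m+1+3), p1 Y 0 x * p2 Z x k - p2 Z 0 x * p1 Y x k =
        (if x = 1 then Y 0 1 * Z 1 k else 0) + (if x = 2 then Y 0 2 * Z 2 k else 0) := by
      intro x
      have h12 : (1 : Fin (m+1+3)) ≠ 2 := by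
        intro h; have h := congrArg Fin.val h; rw [h1, h2] at h; omega
      by_cases g1 : x = 1
      · subst g1; simp [p1, p2, h1, hk, h12]
      · by_cases g2 : x = 2
        · subst g2; simp [p1, p2, h2, hk, h12.symm]
        · have g1' : x.val ≠ 1 := fun h => g1 (Fin.ext h)
          have g2' : x.val ≠ 2 := fun h => g2 (Fin.ext h)
          simp [p1, p2, g1, g2, g1', g2', hk]
    simp only [br, Matrix.sub_apply, Matrix.mul_apply]
    rw [← Finset.sum_sub_distrib, Finset.sum_congr rfl (fun x _ => u x), Finset.sum_add_distrib]
    simp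
  rw [key, key, r1, r2, r3, r4, t1, t2, t3, t4, b0, bk] at E
  field_simp at E
  linarith

end FlagMfld

theorem statement14 (n : ℕ) (hn : 4 ≤ n) (s t : ℝ) (hs : 0 < s) (ht : 0 < t) :
    nkCond (n := n) s t f0 ↔ s = 1 := by
  obtain ⟨m, rfl⟩ := Nat.exists_eq_add_of_le hn
  have e : 4 + m = m + 1 + 3 := by omega
  rw [e]
  constructor
  · exact back ht
  · rintro rfl X hX
    have h : ∀ i j, X i j = - X j i := fun i j => congrFun (congrFun hX.1 j) i
    rw [pM_br h, Ust_f0, Ust_f0]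
    ext i j
    simp [f0_apply]
end

section
/- Consider SO(n)/SO(2)×SO(n−3) as a 6-symmetric space with canonical f-structures f₁, f₂, f₃, f₄. For s, t > 0: f₁ satisfies the Killing condition for (s,t) — that is, (1/2)[X, f₁X]_𝔪 + U_{s,t}(X, f₁X) − f₁(U_{s,t}(X,X)) = 0 for all X ∈ 𝔪 — if and only if s = 1 and t = 4/3; and none of f₂, f₃, f₄ satisfies the Killing condition for any s, t > 0. -/
open Matrix

open FlagMfld

namespace FlagMfld

/-- Element of `𝔪` from its entries. -/
noncomputable def mk {m : ℕ} (a b : ℝ) (u v w : Fin m → ℝ) : Matrix (Fin (m+3)) (Fin (m+3)) ℝ :=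
  Matrix.of (vecCons (vecCons 0 (vecCons a (vecCons b u)))
    (vecCons (vecCons (-a) (vecCons 0 (vecCons 0 v)))
    (vecCons (vecCons (-b) (vecCons 0 (vecCons 0 w)))
    (fun i => vecCons (-u i) (vecCons (-v i) (vecCons (-w i) 0))))))

theorem fin3_cases_s16 {m : ℕ} {P : Fin (m+3) → Prop} (h0 : P 0) (h1 : P (Fin.succ 0))
    (h2 : P (Fin.succ (Fin.succ 0))) (h3 : ∀ i : Fin m, P i.succ.succ.succ) : ∀ i, P i :=
  Fin.cases h0 (Fin.cases h1 (Fin.cases h2 h3))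

theorem ext3 {m : ℕ} {A B : Matrix (Fin (m+3)) (Fin (m+3)) ℝ}
    (h00 : A 0 0 = B 0 0) (h01 : A 0 (Fin.succ 0) = B 0 (Fin.succ 0))
    (h02 : A 0 (Fin.succ (Fin.succ 0)) = B 0 (Fin.succ (Fin.succ 0)))
    (h03 : ∀ j : Fin m, A 0 j.succ.succ.succ = B 0 j.succ.succ.succ)
    (h10 : A (Fin.succ 0) 0 = B (Fin.succ 0) 0)
    (h11 : A (Fin.succ 0) (Fin.succ 0) = B (Fin.succ 0) (Fin.succ 0))
    (h12 : A (Fin.succ 0) (Fin.succ (Fin.succ 0)) = B (Fin.succ 0) (Fin.succ (Fin.succ 0)))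
    (h13 : ∀ j : Fin m, A (Fin.succ 0) j.succ.succ.succ = B (Fin.succ 0) j.succ.succ.succ)
    (h20 : A (Fin.succ (Fin.succ 0)) 0 = B (Fin.succ (Fin.succ 0)) 0)
    (h21 : A (Fin.succ (Fin.succ 0)) (Fin.succ 0) = B (Fin.succ (Fin.succ 0)) (Fin.succ 0))
    (h22 : A (Fin.succ (Fin.succ 0)) (Fin.succ (Fin.succ 0))
      = B (Fin.succ (Fin.succ 0)) (Fin.succ (Fin.succ 0)))
    (h23 : ∀ j : Fin m, A (Fin.succ (Fin.succ 0)) j.succ.succ.succ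
      = B (Fin.succ (Fin.succ 0)) j.succ.succ.succ)
    (h30 : ∀ i : Fin m, A i.succ.succ.succ 0 = B i.succ.succ.succ 0)
    (h31 : ∀ i : Fin m, A i.succ.succ.succ (Fin.succ 0) = B i.succ.succ.succ (Fin.succ 0))
    (h32 : ∀ i : Fin m, A i.succ.succ.succ (Fin.succ (Fin.succ 0))
      = B i.succ.succ.succ (Fin.succ (Fin.succ 0)))
    (h33 : ∀ i j : Fin m, A i.succ.succ.succ j.succ.succ.succ
      = B i.succ.succ.succ j.succ.succ.succ) : A = B := by
  ext i j
  revert i j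
  refine fin3_cases_s16 ?_ ?_ ?_ ?_
  · exact fin3_cases_s16 h00 h01 h02 h03
  · exact fin3_cases_s16 h10 h11 h12 h13
  · exact fin3_cases_s16 h20 h21 h22 h23
  · exact fun i => fin3_cases_s16 (h30 i) (h31 i) (h32 i) (h33 i)

variable {m : ℕ} (a b a' b' c : ℝ) (u v w u' v' w' : Fin m → ℝ)

theorem mk_entries :
    (mk a b u v w 0 0 = 0) ∧
    (mk a b u v w 0 (Fin.succ 0) = a) ∧
    (mk a b u v w 0 (Fin.succ (Fin.succ 0)) = b) ∧
    (∀ (l : Fin m), mk a b u v w 0 l.succ.succ.succ = u l) ∧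
    (mk a b u v w (Fin.succ 0) 0 = -a) ∧
    (mk a b u v w (Fin.succ 0) (Fin.succ 0) = 0) ∧
    (mk a b u v w (Fin.succ 0) (Fin.succ (Fin.succ 0)) = 0) ∧
    (∀ (l : Fin m), mk a b u v w (Fin.succ 0) l.succ.succ.succ = v l) ∧
    (mk a b u v w (Fin.succ (Fin.succ 0)) 0 = -b) ∧
    (mk a b u v w (Fin.succ (Fin.succ 0)) (Fin.succ 0) = 0) ∧
    (mk a b u v w (Fin.succ (Fin.succ 0)) (Fin.succ (Fin.succ 0)) = 0) ∧
    (∀ (l : Fin m), mk a b u v w (Fin.succ (Fin.succ 0)) l.succ.succ.succ = w l) ∧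
    (∀ (k : Fin m), mk a b u v w k.succ.succ.succ 0 = -u k) ∧
    (∀ (k : Fin m), mk a b u v w k.succ.succ.succ (Fin.succ 0) = -v k) ∧
    (∀ (k : Fin m), mk a b u v w k.succ.succ.succ (Fin.succ (Fin.succ 0)) = -w k) ∧
    (∀ (k : Fin m) (l : Fin m), mk a b u v w k.succ.succ.succ l.succ.succ.succ = 0) := by
  refine ⟨?_, ?_, ?_, ?_, ?_, ?_, ?_, ?_, ?_, ?_, ?_, ?_, ?_, ?_, ?_, ?_⟩ <;> intros <;> rfl

theorem B6_entries :
    ((B6 : Matrix (Fin (m+3)) (Fin (m+3)) ℝ) 0 0 = 1) ∧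
    ((B6 : Matrix (Fin (m+3)) (Fin (m+3)) ℝ) 0 (Fin.succ 0) = 0) ∧
    ((B6 : Matrix (Fin (m+3)) (Fin (m+3)) ℝ) 0 (Fin.succ (Fin.succ 0)) = 0) ∧
    (∀ (l : Fin m), (B6 : Matrix (Fin (m+3)) (Fin (m+3)) ℝ) 0 l.succ.succ.succ = 0) ∧
    ((B6 : Matrix (Fin (m+3)) (Fin (m+3)) ℝ) (Fin.succ 0) 0 = 0) ∧
    ((B6 : Matrix (Fin (m+3)) (Fin (m+3)) ℝ) (Fin.succ 0) (Fin.succ 0) = 1/2) ∧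
    ((B6 : Matrix (Fin (m+3)) (Fin (m+3)) ℝ) (Fin.succ 0) (Fin.succ (Fin.succ 0)) = Real.sqrt 3 / 2) ∧
    (∀ (l : Fin m), (B6 : Matrix (Fin (m+3)) (Fin (m+3)) ℝ) (Fin.succ 0) l.succ.succ.succ = 0) ∧
    ((B6 : Matrix (Fin (m+3)) (Fin (m+3)) ℝ) (Fin.succ (Fin.succ 0)) 0 = 0) ∧
    ((B6 : Matrix (Fin (m+3)) (Fin (m+3)) ℝ) (Fin.succ (Fin.succ 0)) (Fin.succ 0) = -(Real.sqrt 3 / 2)) ∧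
    ((B6 : Matrix (Fin (m+3)) (Fin (m+3)) ℝ) (Fin.succ (Fin.succ 0)) (Fin.succ (Fin.succ 0)) = 1/2) ∧
    (∀ (l : Fin m), (B6 : Matrix (Fin (m+3)) (Fin (m+3)) ℝ) (Fin.succ (Fin.succ 0)) l.succ.succ.succ = 0) ∧
    (∀ (k : Fin m), (B6 : Matrix (Fin (m+3)) (Fin (m+3)) ℝ) k.succ.succ.succ 0 = 0) ∧
    (∀ (k : Fin m), (B6 : Matrix (Fin (m+3)) (Fin (m+3)) ℝ) k.succ.succ.succ (Fin.succ 0) = 0) ∧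
    (∀ (k : Fin m), (B6 : Matrix (Fin (m+3)) (Fin (m+3)) ℝ) k.succ.succ.succ (Fin.succ (Fin.succ 0)) = 0) ∧
    (∀ (k : Fin m) (l : Fin m), (B6 : Matrix (Fin (m+3)) (Fin (m+3)) ℝ) k.succ.succ.succ l.succ.succ.succ = if k = l then -1 else 0) := by
  refine ⟨?_, ?_, ?_, ?_, ?_, ?_, ?_, ?_, ?_, ?_, ?_, ?_, ?_, ?_, ?_, ?_⟩ <;> intros <;>
    simp only [B6, of_apply, Fin.val_zero, Fin.val_succ, Fin.ext_iff] <;> norm_num <;> grind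

theorem sum3 (f : Fin (m+3) → ℝ) : ∑ i, f i = f 0 + f (Fin.succ 0) + f (Fin.succ (Fin.succ 0))
    + ∑ i : Fin m, f i.succ.succ.succ := by
  rw [Fin.sum_univ_succ, Fin.sum_univ_succ, Fin.sum_univ_succ]; ring

theorem mk_add : mk a b u v w + mk a' b' u' v' w'
    = mk (a+a') (b+b') (u+u') (v+v') (w+w') := by
  apply ext3 <;> intros <;> simp [mk] <;> ring

theorem mk_smul : c • mk a b u v w = mk (c*a) (c*b) (c•u) (c•v) (c•w) := by
  apply ext3 <;> intros <;> simp [mk]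

theorem mk_sub : mk a b u v w - mk a' b' u' v' w'
    = mk (a-a') (b-b') (u-u') (v-v') (w-w') := by
  apply ext3 <;> intros <;> simp [mk] <;> ring

theorem p1_mk : p1 (mk a b u v w) = mk a b 0 0 0 := by
  apply ext3 <;> intros <;> simp only [mk_entries, p1, of_apply, Fin.val_zero, Fin.val_succ] <;> simp

theorem p2_mk : p2 (mk a b u v w) = mk 0 0 0 v w := by
  apply ext3 <;> intros <;> simp only [mk_entries, p2, of_apply, Fin.val_zero, Fin.val_succ] <;> simp

theorem p3_mk : p3 (mk a b u v w) = mk 0 0 u 0 0 := by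
  apply ext3 <;> intros <;> simp only [mk_entries, p3, of_apply, Fin.val_zero, Fin.val_succ] <;> simp

theorem inM_mk : inM (mk a b u v w) := by
  refine ⟨?_, ?_, ?_⟩
  · apply ext3 <;> intros <;> simp [mk]
  · refine fin3_cases_s16 ?_ ?_ ?_ ?_ <;> intros <;> rename_i j hi hj <;> revert j
    all_goals (refine fin3_cases_s16 ?_ ?_ ?_ ?_ <;> intros <;> simp_all only [mk_entries, Fin.val_zero, Fin.val_succ] <;> omega)
  · refine fin3_cases_s16 ?_ ?_ ?_ ?_ <;> intros <;> rename_i j hi hj <;> revert j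
    all_goals (refine fin3_cases_s16 ?_ ?_ ?_ ?_ <;> intros <;> simp_all only [mk_entries, Fin.val_zero, Fin.val_succ] <;> omega)

theorem eq_mk (X : Matrix (Fin (m+3)) (Fin (m+3)) ℝ) (h : inM X) :
    ∃ a b u v w, X = mk a b u v w := by
  obtain ⟨h1, h2, h3⟩ := h
  have hs : ∀ i j, X i j = - X j i := fun i j => by
    have := congrFun (congrFun h1 j) i
    simpa using this
  have hd : ∀ i, X i i = 0 := fun i => by have := hs i i; linarith
  refine ⟨X 0 (Fin.succ 0), X 0 (Fin.succ (Fin.succ 0)), fun j => X 0 j.succ.succ.succ,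
    fun j => X (Fin.succ 0) j.succ.succ.succ,
    fun j => X (Fin.succ (Fin.succ 0)) j.succ.succ.succ, ?_⟩
  have h12 : X (Fin.succ 0) (Fin.succ (Fin.succ 0)) = 0 := h2 _ _ (by simp) (by simp)
  apply ext3 <;> intros <;> simp only [mk, of_apply, cons_val_zero, cons_val_succ, Pi.zero_apply]
  case h00 => exact hd _
  case h11 => exact hd _
  case h22 => exact hd _
  case h12 => exact h12
  case h21 => rw [hs, h12, neg_zero]
  case h33 => exact h3 _ _ (by simp) (by simp)
  all_goals exact hs _ _

theorem pM_br_mk : pM (br (mk a b u v w) (mk a' b' u' v' w')) =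
    mk (u' ⬝ᵥ v - u ⬝ᵥ v') (u' ⬝ᵥ w - u ⬝ᵥ w') (a • v' + b • w' - a' • v - b' • w)
      (a' • u - a • u') (b' • u - b • u') := by
  apply ext3 <;> intros <;>
    simp only [pM, of_apply, Fin.val_zero, Fin.val_succ, mk_entries, br, mul_apply, Matrix.sub_apply, sum3, dotProduct, Pi.zero_apply] <;>
    simp [mul_comm] <;> ring

theorem br_21 : br (mk 0 0 0 v w) (mk 0 0 u' 0 0) =
    mk (u' ⬝ᵥ v) (u' ⬝ᵥ w) 0 0 0 := by
  apply ext3 <;> intros <;>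
    simp only [mk_entries, br, mul_apply, Matrix.sub_apply, sum3, dotProduct, Pi.zero_apply] <;> simp [mul_comm]

theorem br_13 : br (mk a b 0 0 0) (mk 0 0 u' 0 0) =
    mk 0 0 0 (- a • u') (- b • u') := by
  apply ext3 <;> intros <;>
    simp only [mk_entries, br, mul_apply, Matrix.sub_apply, sum3, dotProduct, Pi.zero_apply] <;> simp [mul_comm]

theorem br_12 : br (mk a b 0 0 0) (mk 0 0 0 v' w') =
    mk 0 0 (a • v' + b • w') 0 0 := by
  apply ext3 <;> intros <;>
    simp only [mk_entries, br, mul_apply, Matrix.sub_apply, sum3, dotProduct, Pi.zero_apply] <;> simp [mul_comm] <;> ring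

theorem Ust_mk (s t : ℝ) : Ust s t (mk a b u v w) (mk a' b' u' v' w') =
    mk ((t-s)/2 * (u' ⬝ᵥ v + u ⬝ᵥ v')) ((t-s)/2 * (u' ⬝ᵥ w + u ⬝ᵥ w'))
      (((s-1)/(2*t)) • (a • v' + b • w' + (a' • v + b' • w)))
      (((t-1)/(2*s)) • (-a • u' + -a' • u)) (((t-1)/(2*s)) • (-b • u' + -b' • u)) := by
  simp only [Ust, p1_mk, p2_mk, p3_mk, br_21, br_13, br_12, mk_add, mk_smul]
  simp

theorem th6_mk : th6 (mk a b u v w) =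
    mk (a/2 + Real.sqrt 3/2*b) (-(Real.sqrt 3/2)*a+b/2) (-u)
      (-((1/2:ℝ)•v + (Real.sqrt 3/2)•w)) (-(-(Real.sqrt 3/2)•v + (1/2:ℝ)•w)) := by
  apply ext3 <;> intros <;>
    simp only [mk_entries, B6_entries, th6, mul_apply, transpose_apply, sum3] <;> simp <;> ring

theorem mk_congr {a b a' b' : ℝ} {u v w u' v' w' : Fin m → ℝ} (h1 : a = a') (h2 : b = b')
    (h3 : u = u') (h4 : v = v') (h5 : w = w') : mk a b u v w = mk a' b' u' v' w' := by
  subst_vars; rfl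

theorem f1_mk : f1 (mk a b u v w) = mk b (-a) 0 (-w) v := by
  have h : (Real.sqrt 3)^2 = 3 := Real.sq_sqrt (by norm_num)
  have h0 : Real.sqrt 3 ≠ 0 := by positivity
  simp only [f1, th6_mk, mk_sub, mk_add, mk_smul]
  generalize Real.sqrt 3 = r at *
  apply mk_congr <;> (try ext i) <;> simp <;> field_simp <;> grind

theorem f2_mk : f2 (mk a b u v w) = mk 0 0 0 (-w) v := by
  have h : (Real.sqrt 3)^2 = 3 := Real.sq_sqrt (by norm_num)
  have h0 : Real.sqrt 3 ≠ 0 := by positivity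
  simp only [f2, th6_mk, mk_sub, mk_add, mk_smul]
  generalize Real.sqrt 3 = r at *
  apply mk_congr <;> (try ext i) <;> simp <;> field_simp <;> grind

theorem f3_mk : f3 (mk a b u v w) = mk b (-a) 0 0 0 := by
  have h : (Real.sqrt 3)^2 = 3 := Real.sq_sqrt (by norm_num)
  have h0 : Real.sqrt 3 ≠ 0 := by positivity
  simp only [f3, th6_mk, mk_sub, mk_add, mk_smul]
  generalize Real.sqrt 3 = r at *
  apply mk_congr <;> (try ext i) <;> simp <;> field_simp <;> grind

theorem f4_mk : f4 (mk a b u v w) = mk b (-a) 0 w (-v) := by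
  have h : (Real.sqrt 3)^2 = 3 := Real.sq_sqrt (by norm_num)
  have h0 : Real.sqrt 3 ≠ 0 := by positivity
  simp only [f4, th6_mk, mk_sub, mk_add, mk_smul]
  generalize Real.sqrt 3 = r at *
  apply mk_congr <;> (try ext i) <;> simp <;> field_simp <;> grind

theorem mk_zero_iff : mk a b u v w = 0 ↔ a = 0 ∧ b = 0 ∧ u = 0 ∧ v = 0 ∧ w = 0 := by
  constructor
  · intro h
    have e := fun i j => congrFun (congrFun h i) j
    refine ⟨by simpa [mk] using e 0 (Fin.succ 0), by simpa [mk] using e 0 (Fin.succ (Fin.succ 0)),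
      funext fun j => by simpa [mk] using e 0 j.succ.succ.succ,
      funext fun j => by simpa [mk] using e (Fin.succ 0) j.succ.succ.succ,
      funext fun j => by simpa [mk] using e (Fin.succ (Fin.succ 0)) j.succ.succ.succ⟩
  · rintro ⟨rfl, rfl, rfl, rfl, rfl⟩
    apply ext3 <;> intros <;> simp [mk]

theorem kill_mk {s t : ℝ} (e d : ℝ)
    (f : Matrix (Fin (m+3)) (Fin (m+3)) ℝ → Matrix (Fin (m+3)) (Fin (m+3)) ℝ)
    (hf : ∀ a b u v w, f (mk a b u v w) = mk (e*b) (-e*a) 0 (d•w) (-d•v)) (hm : 0 < m) :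
    killCond s t f ↔ (-d/2 + (t-s)/2*d - 2*e*((t-s)/2) = 0 ∧
      (d+e)/2 + (s-1)/(2*t)*(d-e) = 0 ∧ e/2 - (t-1)/(2*s)*e + 2*d*((t-1)/(2*s)) = 0) := by
  generalize h1 : (t-s)/2 = c1
  generalize h2 : (t-1)/(2*s) = c2
  generalize h3 : (s-1)/(2*t) = c3
  constructor
  · intro H
    have K := H (mk 1 0 (Pi.single ⟨0, hm⟩ 1) 0 (Pi.single ⟨0, hm⟩ 1)) (inM_mk ..)
    simp only [hf, pM_br_mk, Ust_mk, mk_add, mk_smul, mk_sub, mk_zero_iff, h1, h2, h3] at K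
    obtain ⟨k1, -, k3, -, k5⟩ := K
    have k3 := congrFun k3 ⟨0, hm⟩
    have k5 := congrFun k5 ⟨0, hm⟩
    simp at k1 k3 k5
    refine ⟨?_, ?_, ?_⟩ <;> linarith
  · rintro ⟨e1, e2, e3⟩ X hX
    obtain ⟨a, b, u, v, w, rfl⟩ := eq_mk X hX
    simp only [hf, pM_br_mk, Ust_mk, mk_add, mk_smul, mk_sub, mk_zero_iff, h1, h2, h3]
    refine ⟨?_, ?_, ?_, ?_, ?_⟩ <;> (try ext i) <;> simp
    · linear_combination (u ⬝ᵥ w) * e1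
    · linear_combination -(u ⬝ᵥ v) * e1
    · linear_combination (a * w i - b * v i) * e2
    · linear_combination (b * u i) * e3
    · linear_combination -(a * u i) * e3

end FlagMfld

/-- On the 6-symmetric space `SO(n)/SO(2)×SO(n-3)`: `f₁` is a Killing
f-structure for `(s,t)` iff `s = 1 ∧ t = 4/3`, and none of `f₂, f₃, f₄` is a Killing
f-structure for any `s, t > 0`. -/
theorem statement16 (n : ℕ) (hn : 4 ≤ n) (s t : ℝ) (hs : 0 < s) (ht : 0 < t) :
    (killCond (n := n) s t f1 ↔ (s = 1 ∧ t = 4 / 3)) ∧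
    ¬ killCond (n := n) s t f2 ∧
    ¬ killCond (n := n) s t f3 ∧
    ¬ killCond (n := n) s t f4 := by
  obtain ⟨k, rfl⟩ := Nat.exists_eq_add_of_le hn
  obtain ⟨m, hm, hmk⟩ : ∃ m, 0 < m ∧ 4 + k = m + 3 := ⟨k + 1, by omega, by omega⟩
  generalize 4 + k = n at *
  subst hmk
  rw [kill_mk 1 (-1) f1 (fun a b u v w => by rw [f1_mk]; simp) hm,
    kill_mk 0 (-1) f2 (fun a b u v w => by rw [f2_mk]; simp) hm,
    kill_mk 1 0 f3 (fun a b u v w => by rw [f3_mk]; simp) hm,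
    kill_mk 1 1 f4 (fun a b u v w => by rw [f4_mk]; simp) hm]
  refine ⟨⟨?_, ?_⟩, ?_, ?_, ?_⟩
  · rintro ⟨e1, e2, -⟩
    have : s = 1 := by
      field_simp at e2
      linarith
    exact ⟨this, by linarith⟩
  · rintro ⟨rfl, rfl⟩
    norm_num
  · rintro ⟨e1, e2, e3⟩
    field_simp at e2 e3
    linarith
  · rintro ⟨e1, e2, e3⟩
    field_simp at e2
    linarith
  · rintro ⟨e1, e2, e3⟩
    norm_num at e2
end

section
/- Consider SO(n)/SO(2)×SO(n−3) as a 6-symmetric space with canonical f-structures f₁, f₂, f₃. For s, t > 0: f₁ satisfies the NKf condition for (s,t) — that is, (1/2)[f₁X, f₁²X]_𝔪 + U_{s,t}(f₁X, f₁²X) − f₁(U_{s,t}(f₁X, f₁X)) = 0 for all X ∈ 𝔪 — if and only if s = 1; and f₂ and f₃ satisfy the NKf condition for all s, t > 0, i.e. they are nearly Kähler f-structures with respect to every invariant Riemannian metric. -/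
open Matrix

namespace FlagMfld

set_option linter.all false

/-- Parametrized element of `𝔪`. -/
def MM {m : ℕ} (a1 a2 : ℝ) (b1 b2 c : Fin m → ℝ) : Matrix (Fin (m+3)) (Fin (m+3)) ℝ :=
  Matrix.of (Fin.cons (Fin.cons 0 (Fin.cons a1 (Fin.cons a2 c)))
    (Fin.cons (Fin.cons (-a1) (Fin.cons 0 (Fin.cons 0 b1)))
    (Fin.cons (Fin.cons (-a2) (Fin.cons 0 (Fin.cons 0 b2)))
      (fun i => Fin.cons (-c i) (Fin.cons (-b1 i) (Fin.cons (-b2 i) 0))))))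

lemma fcases {m : ℕ} {P : Fin (m+3) → Prop} (h0 : P 0) (h1 : P 1)
    (h2 : P 2) (h3 : ∀ i : Fin m, P i.succ.succ.succ) : ∀ i, P i := by
  intro i
  refine Fin.cases h0 (fun i => ?_) i
  refine Fin.cases h1 (fun i => ?_) i
  exact Fin.cases h2 h3 i

lemma fsum {m : ℕ} (f : Fin (m+3) → ℝ) : ∑ i, f i =
    f 0 + f 1 + f 2 + ∑ i : Fin m, f i.succ.succ.succ := by
  rw [Fin.sum_univ_succ, Fin.sum_univ_succ, Fin.sum_univ_succ, ← add_assoc, ← add_assoc]; rfl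

@[simp] lemma mod2 (m : ℕ) : 2 % (m + 3) = 2 := Nat.mod_eq_of_lt (by omega)
@[simp] lemma two_ne (m : ℕ) : (2 : Fin (m + 3)) ≠ 0 := by
  intro h
  have := congrArg Fin.val h
  simp at this
@[simp] lemma two_ne_val (m : ℕ) : ((2 : Fin (m + 3)) : ℕ) = 2 := mod2 m
lemma MM00 {m : ℕ} (a1 a2 : ℝ) (b1 b2 c : Fin m → ℝ) :
    MM a1 a2 b1 b2 c 0 0 = 0 := rfl
lemma MM01 {m : ℕ} (a1 a2 : ℝ) (b1 b2 c : Fin m → ℝ) :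
    MM a1 a2 b1 b2 c 0 1 = a1 := rfl
lemma MM02 {m : ℕ} (a1 a2 : ℝ) (b1 b2 c : Fin m → ℝ) :
    MM a1 a2 b1 b2 c 0 2 = a2 := rfl
lemma MM03 {m : ℕ} (a1 a2 : ℝ) (b1 b2 c : Fin m → ℝ) (j : Fin m) :
    MM a1 a2 b1 b2 c 0 j.succ.succ.succ = c j := rfl
lemma MM10 {m : ℕ} (a1 a2 : ℝ) (b1 b2 c : Fin m → ℝ) :
    MM a1 a2 b1 b2 c 1 0 = -a1 := rfl
lemma MM11 {m : ℕ} (a1 a2 : ℝ) (b1 b2 c : Fin m → ℝ) :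
    MM a1 a2 b1 b2 c 1 1 = 0 := rfl
lemma MM12 {m : ℕ} (a1 a2 : ℝ) (b1 b2 c : Fin m → ℝ) :
    MM a1 a2 b1 b2 c 1 2 = 0 := rfl
lemma MM13 {m : ℕ} (a1 a2 : ℝ) (b1 b2 c : Fin m → ℝ) (j : Fin m) :
    MM a1 a2 b1 b2 c 1 j.succ.succ.succ = b1 j := rfl
lemma MM20 {m : ℕ} (a1 a2 : ℝ) (b1 b2 c : Fin m → ℝ) :
    MM a1 a2 b1 b2 c 2 0 = -a2 := rfl
lemma MM21 {m : ℕ} (a1 a2 : ℝ) (b1 b2 c : Fin m → ℝ) :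
    MM a1 a2 b1 b2 c 2 1 = 0 := rfl
lemma MM22 {m : ℕ} (a1 a2 : ℝ) (b1 b2 c : Fin m → ℝ) :
    MM a1 a2 b1 b2 c 2 2 = 0 := rfl
lemma MM23 {m : ℕ} (a1 a2 : ℝ) (b1 b2 c : Fin m → ℝ) (j : Fin m) :
    MM a1 a2 b1 b2 c 2 j.succ.succ.succ = b2 j := rfl
lemma MM30 {m : ℕ} (a1 a2 : ℝ) (b1 b2 c : Fin m → ℝ) (i : Fin m) :
    MM a1 a2 b1 b2 c i.succ.succ.succ 0 = -c i := rfl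
lemma MM31 {m : ℕ} (a1 a2 : ℝ) (b1 b2 c : Fin m → ℝ) (i : Fin m) :
    MM a1 a2 b1 b2 c i.succ.succ.succ 1 = -b1 i := rfl
lemma MM32 {m : ℕ} (a1 a2 : ℝ) (b1 b2 c : Fin m → ℝ) (i : Fin m) :
    MM a1 a2 b1 b2 c i.succ.succ.succ 2 = -b2 i := rfl
lemma MM33 {m : ℕ} (a1 a2 : ℝ) (b1 b2 c : Fin m → ℝ) (i : Fin m) (j : Fin m) :
    MM a1 a2 b1 b2 c i.succ.succ.succ j.succ.succ.succ = 0 := rfl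

lemma th6_MM {m : ℕ} (a1 a2 : ℝ) (b1 b2 c : Fin m → ℝ) :
    th6 (MM a1 a2 b1 b2 c) = MM (a1/2 + Real.sqrt 3/2*a2) (a2/2 - Real.sqrt 3/2*a1)
      (fun i => -(b1 i/2 + Real.sqrt 3/2*b2 i)) (fun i => -(b2 i/2 - Real.sqrt 3/2*b1 i))
      (fun i => - c i) := by
  ext i j
  revert i j
  refine fcases ?_ ?_ ?_ ?_ <;> [skip;skip;skip;intro i] <;> refine fcases ?_ ?_ ?_ ?_ <;>
    [skip;skip;skip;intro j;skip;skip;skip;intro j;skip;skip;skip;intro j;skip;skip;skip;intro j] <;>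
    simp [th6, Matrix.mul_apply, fsum, MM00, MM01, MM02, MM03, MM10, MM11, MM12, MM13, MM20, MM21, MM22, MM23, MM30, MM31, MM32, MM33, B6] <;>
    first | done | (ring_nf; done) | skip

lemma exMM {m : ℕ} (X : Matrix (Fin (m+3)) (Fin (m+3)) ℝ) (h : inM X) :
    ∃ a1 a2 b1 b2 c, X = MM a1 a2 b1 b2 c := by
  obtain ⟨h1, h2, h3⟩ := h
  have hs : ∀ i j, X i j = - X j i := fun i j => by
    have := congrFun (congrFun h1 j) i
    simpa using this
  have hd : ∀ i, X i i = 0 := fun i => by linarith [hs i i]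
  refine ⟨X 0 1, X 0 2,
    fun i => X 1 i.succ.succ.succ, fun i => X 2 i.succ.succ.succ,
    fun i => X 0 i.succ.succ.succ, ?_⟩
  have h12 : X 1 2 = 0 := h2 _ _ (by simp) (by simp)
  ext i j
  revert i j
  refine fcases ?_ ?_ ?_ ?_ <;> [skip;skip;skip;intro i] <;> refine fcases ?_ ?_ ?_ ?_ <;>
    [skip;skip;skip;intro j;skip;skip;skip;intro j;skip;skip;skip;intro j;skip;skip;skip;intro j] <;>
    simp only [MM00, MM01, MM02, MM03, MM10, MM11, MM12, MM13, MM20, MM21, MM22, MM23, MM30, MM31, MM32, MM33, Matrix.of_apply, hd, h12, Pi.zero_apply] <;>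
    first | exact hs _ _ | (rw [hs, h12, neg_zero]) | exact h3 _ _ (by simp) (by simp)

lemma inM_MM {m : ℕ} (a1 a2 : ℝ) (b1 b2 c : Fin m → ℝ) : inM (MM a1 a2 b1 b2 c) := by
  refine ⟨?_, ?_, ?_⟩
  · ext i j
    revert i j
    refine fcases ?_ ?_ ?_ ?_ <;> [skip;skip;skip;intro i] <;> refine fcases ?_ ?_ ?_ ?_ <;>
    [skip;skip;skip;intro j;skip;skip;skip;intro j;skip;skip;skip;intro j;skip;skip;skip;intro j] <;>
    simp [MM00, MM01, MM02, MM03, MM10, MM11, MM12, MM13, MM20, MM21, MM22, MM23, MM30, MM31, MM32, MM33]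
  · refine fcases ?_ ?_ ?_ ?_ <;> [skip;skip;skip;intro i] <;> refine fcases ?_ ?_ ?_ ?_ <;>
    [skip;skip;skip;intro j;skip;skip;skip;intro j;skip;skip;skip;intro j;skip;skip;skip;intro j] <;>
    simp [MM00, MM01, MM02, MM03, MM10, MM11, MM12, MM13, MM20, MM21, MM22, MM23, MM30, MM31, MM32, MM33]
  · refine fcases ?_ ?_ ?_ ?_ <;> [skip;skip;skip;intro i] <;> refine fcases ?_ ?_ ?_ ?_ <;>
    [skip;skip;skip;intro j;skip;skip;skip;intro j;skip;skip;skip;intro j;skip;skip;skip;intro j] <;>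
    simp [MM00, MM01, MM02, MM03, MM10, MM11, MM12, MM13, MM20, MM21, MM22, MM23, MM30, MM31, MM32, MM33]

lemma add_MM {m : ℕ} (a1 a2 : ℝ) (b1 b2 c : Fin m → ℝ) (a1' a2' : ℝ) (b1' b2' c' : Fin m → ℝ) :
    MM a1 a2 b1 b2 c + MM a1' a2' b1' b2' c' =
      MM (a1 + a1') (a2+a2') (b1+b1') (b2+b2') (c+c') := by
  ext i j
  revert i j
  refine fcases ?_ ?_ ?_ ?_ <;> [skip;skip;skip;intro i] <;> refine fcases ?_ ?_ ?_ ?_ <;>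
    [skip;skip;skip;intro j;skip;skip;skip;intro j;skip;skip;skip;intro j;skip;skip;skip;intro j] <;>
    simp [MM00, MM01, MM02, MM03, MM10, MM11, MM12, MM13, MM20, MM21, MM22, MM23, MM30, MM31, MM32, MM33] <;> ring

lemma smul_MM {m : ℕ} (r : ℝ) (a1 a2 : ℝ) (b1 b2 c : Fin m → ℝ) :
    r • MM a1 a2 b1 b2 c = MM (r*a1) (r*a2) (r•b1) (r•b2) (r•c) := by
  ext i j
  revert i j
  refine fcases ?_ ?_ ?_ ?_ <;> [skip;skip;skip;intro i] <;> refine fcases ?_ ?_ ?_ ?_ <;>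
    [skip;skip;skip;intro j;skip;skip;skip;intro j;skip;skip;skip;intro j;skip;skip;skip;intro j] <;>
    simp [MM00, MM01, MM02, MM03, MM10, MM11, MM12, MM13, MM20, MM21, MM22, MM23, MM30, MM31, MM32, MM33]

lemma sub_MM {m : ℕ} (a1 a2 : ℝ) (b1 b2 c : Fin m → ℝ) (a1' a2' : ℝ) (b1' b2' c' : Fin m → ℝ) :
    MM a1 a2 b1 b2 c - MM a1' a2' b1' b2' c' =
      MM (a1 - a1') (a2-a2') (b1-b1') (b2-b2') (c-c') := by
  ext i j
  revert i j
  refine fcases ?_ ?_ ?_ ?_ <;> [skip;skip;skip;intro i] <;> refine fcases ?_ ?_ ?_ ?_ <;>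
    [skip;skip;skip;intro j;skip;skip;skip;intro j;skip;skip;skip;intro j;skip;skip;skip;intro j] <;>
    simp [MM00, MM01, MM02, MM03, MM10, MM11, MM12, MM13, MM20, MM21, MM22, MM23, MM30, MM31, MM32, MM33] <;> ring

lemma zero_MM {m : ℕ} : MM (m := m) 0 0 0 0 0 = 0 := by
  have := smul_MM (m := m) 0 0 0 0 0 0
  simpa using this.symm

lemma p1_MM {m : ℕ} (a1 a2 : ℝ) (b1 b2 c : Fin m → ℝ) :
    p1 (MM a1 a2 b1 b2 c) = MM a1 a2 0 0 0 := by
  ext i j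
  revert i j
  refine fcases ?_ ?_ ?_ ?_ <;> [skip;skip;skip;intro i] <;> refine fcases ?_ ?_ ?_ ?_ <;>
    [skip;skip;skip;intro j;skip;skip;skip;intro j;skip;skip;skip;intro j;skip;skip;skip;intro j] <;>
    simp [MM00, MM01, MM02, MM03, MM10, MM11, MM12, MM13, MM20, MM21, MM22, MM23, MM30, MM31, MM32, MM33, p1]

lemma p2_MM {m : ℕ} (a1 a2 : ℝ) (b1 b2 c : Fin m → ℝ) :
    p2 (MM a1 a2 b1 b2 c) = MM 0 0 b1 b2 0 := by
  ext i j
  revert i j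
  refine fcases ?_ ?_ ?_ ?_ <;> [skip;skip;skip;intro i] <;> refine fcases ?_ ?_ ?_ ?_ <;>
    [skip;skip;skip;intro j;skip;skip;skip;intro j;skip;skip;skip;intro j;skip;skip;skip;intro j] <;>
    simp [MM00, MM01, MM02, MM03, MM10, MM11, MM12, MM13, MM20, MM21, MM22, MM23, MM30, MM31, MM32, MM33, p2]

lemma p3_MM {m : ℕ} (a1 a2 : ℝ) (b1 b2 c : Fin m → ℝ) :
    p3 (MM a1 a2 b1 b2 c) = MM 0 0 0 0 c := by
  ext i j
  revert i j
  refine fcases ?_ ?_ ?_ ?_ <;> [skip;skip;skip;intro i] <;> refine fcases ?_ ?_ ?_ ?_ <;>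
    [skip;skip;skip;intro j;skip;skip;skip;intro j;skip;skip;skip;intro j;skip;skip;skip;intro j] <;>
    simp [MM00, MM01, MM02, MM03, MM10, MM11, MM12, MM13, MM20, MM21, MM22, MM23, MM30, MM31, MM32, MM33, p3]

lemma br_MM {m : ℕ} (a1 a2 : ℝ) (b1 b2 : Fin m → ℝ) :
    br (MM a1 a2 0 0 0) (MM 0 0 b1 b2 0) = MM 0 0 0 0 (a1•b1+a2•b2) := by
  ext i j
  revert i j
  refine fcases ?_ ?_ ?_ ?_ <;> [skip;skip;skip;intro i] <;> refine fcases ?_ ?_ ?_ ?_ <;>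
    [skip;skip;skip;intro j;skip;skip;skip;intro j;skip;skip;skip;intro j;skip;skip;skip;intro j] <;>
    simp [MM00, MM01, MM02, MM03, MM10, MM11, MM12, MM13, MM20, MM21, MM22, MM23, MM30, MM31, MM32, MM33, br, Matrix.mul_apply, fsum] <;> ring

lemma pMbr_MM {m : ℕ} (a1 a2 : ℝ) (b1 b2 : Fin m → ℝ) (a1' a2' : ℝ) (b1' b2' : Fin m → ℝ) :
    pM (br (MM a1 a2 b1 b2 0) (MM a1' a2' b1' b2' 0)) =
      MM 0 0 0 0 (a1•b1'+a2•b2' - (a1'•b1 + a2'•b2)) := by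
  ext i j
  revert i j
  refine fcases ?_ ?_ ?_ ?_ <;> [skip;skip;skip;intro i] <;> refine fcases ?_ ?_ ?_ ?_ <;>
    [skip;skip;skip;intro j;skip;skip;skip;intro j;skip;skip;skip;intro j;skip;skip;skip;intro j] <;>
    simp [MM00, MM01, MM02, MM03, MM10, MM11, MM12, MM13, MM20, MM21, MM22, MM23, MM30, MM31, MM32, MM33, pM, br, Matrix.mul_apply, fsum] <;>
    first | (ring1; done) | (simp [mul_comm, sub_eq_zero, add_comm]; done) | (simp only [mul_comm]; ring1)

lemma Ust_MM {m : ℕ} (s t : ℝ) (a1 a2 : ℝ) (b1 b2 : Fin m → ℝ) (a1' a2' : ℝ) (b1' b2' : Fin m → ℝ) :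
    Ust s t (MM a1 a2 b1 b2 0) (MM a1' a2' b1' b2' 0) =
      MM 0 0 0 0 (((s-1)/(2*t)) • ((a1•b1'+a2•b2') + (a1'•b1 + a2'•b2))) := by
  have hz : ∀ X : Matrix (Fin (m+3)) (Fin (m+3)) ℝ, br X 0 = 0 := by intro X; simp [br]
  simp only [Ust, p1_MM, p2_MM, p3_MM, zero_MM, hz, br_MM, add_MM, smul_MM]
  simp [smul_MM]

lemma MM_congr {m : ℕ} {a1 a2 : ℝ} {b1 b2 c : Fin m → ℝ} {a1' a2' : ℝ} {b1' b2' c' : Fin m → ℝ}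
    (h1 : a1 = a1') (h2 : a2 = a2') (h3 : ∀ i, b1 i = b1' i) (h4 : ∀ i, b2 i = b2' i)
    (h5 : ∀ i, c i = c' i) : MM a1 a2 b1 b2 c = MM a1' a2' b1' b2' c' := by
  rw [h1, h2, funext h3, funext h4, funext h5]

lemma th6_2 {m : ℕ} (a1 a2 : ℝ) (b1 b2 c : Fin m → ℝ) :
    th6 (th6 (MM a1 a2 b1 b2 c)) = MM (-a1/2 + Real.sqrt 3/2*a2) (-a2/2 - Real.sqrt 3/2*a1)
      (fun i => (-b1 i/2 + Real.sqrt 3/2*b2 i)) (fun i => (-b2 i/2 - Real.sqrt 3/2*b1 i))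
      (fun i => c i) := by
  have h : Real.sqrt 3 * Real.sqrt 3 = 3 := Real.mul_self_sqrt (by norm_num)
  rw [th6_MM, th6_MM]
  apply MM_congr <;> intros <;> grind

lemma th6_4 {m : ℕ} (a1 a2 : ℝ) (b1 b2 c : Fin m → ℝ) :
    th6 (th6 (th6 (th6 (MM a1 a2 b1 b2 c)))) =
     MM (-a1/2 - Real.sqrt 3/2*a2) (-a2/2 + Real.sqrt 3/2*a1)
      (fun i => (-b1 i/2 - Real.sqrt 3/2*b2 i)) (fun i => (-b2 i/2 + Real.sqrt 3/2*b1 i))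
      (fun i => c i) := by
  have h : Real.sqrt 3 * Real.sqrt 3 = 3 := Real.mul_self_sqrt (by norm_num)
  rw [th6_2, th6_2]
  apply MM_congr <;> intros <;> grind

lemma th6_5 {m : ℕ} (a1 a2 : ℝ) (b1 b2 c : Fin m → ℝ) :
    th6 (th6 (th6 (th6 (th6 (MM a1 a2 b1 b2 c))))) =
     MM (a1/2 - Real.sqrt 3/2*a2) (a2/2 + Real.sqrt 3/2*a1)
      (fun i => -(b1 i/2 - Real.sqrt 3/2*b2 i)) (fun i => -(b2 i/2 + Real.sqrt 3/2*b1 i))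
      (fun i => -c i) := by
  have h : Real.sqrt 3 * Real.sqrt 3 = 3 := Real.mul_self_sqrt (by norm_num)
  rw [th6_4, th6_MM]
  apply MM_congr <;> intros <;> grind

lemma f1_MM {m : ℕ} (a1 a2 : ℝ) (b1 b2 c : Fin m → ℝ) :
    f1 (MM a1 a2 b1 b2 c) = MM a2 (-a1) (-b2) b1 0 := by
  have h : Real.sqrt 3 ≠ 0 := by positivity
  rw [f1, th6_5, th6_MM, sub_MM, smul_MM]
  apply MM_congr <;> intros <;> simp <;> field_simp <;> ring

lemma f2_MM {m : ℕ} (a1 a2 : ℝ) (b1 b2 c : Fin m → ℝ) :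
    f2 (MM a1 a2 b1 b2 c) = MM 0 0 (-b2) b1 0 := by
  have h : Real.sqrt 3 ≠ 0 := by positivity
  rw [f2, th6_5, th6_4, th6_2, th6_MM, sub_MM, add_MM, sub_MM, smul_MM]
  apply MM_congr <;> intros <;> simp <;> field_simp <;> ring

lemma f3_MM {m : ℕ} (a1 a2 : ℝ) (b1 b2 c : Fin m → ℝ) :
    f3 (MM a1 a2 b1 b2 c) = MM a2 (-a1) 0 0 0 := by
  have h : Real.sqrt 3 ≠ 0 := by positivity
  rw [f3, th6_5, th6_4, th6_2, th6_MM, add_MM, sub_MM, sub_MM, smul_MM]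
  apply MM_congr <;> intros <;> simp <;> field_simp <;> ring

end FlagMfld

open FlagMfld

/-- On the 6-symmetric space `SO(n)/SO2×SO(n-3)`: `f₁` is a nearly
Kähler f-structure for `(s,t)` iff `s = 1`, while `f₂` and `f₃` are nearly Kähler
f-structures for all `s, t > 0`. -/
theorem statement17 (n : ℕ) (hn : 4 ≤ n) (s t : ℝ) (hs : 0 < s) (ht : 0 < t) :
    (nkCond (n := n) s t f1 ↔ s = 1) ∧
    nkCond (n := n) s t f2 ∧
    nkCond (n := n) s t f3 := by
  obtain ⟨m, rfl⟩ : ∃ m, n = m + 3 := ⟨n - 3, by omega⟩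
  refine ⟨⟨fun h => ?_, fun h => ?_⟩, ?_, ?_⟩
  · have h := h (MM 0 1 (fun _ => 1) (fun _ => 0) 0) (inM_MM _ _ _ _ _)
    simp only [f1_MM, pMbr_MM, Ust_MM, smul_MM, add_MM, sub_MM] at h
    have h := congrFun (congrFun h 0) (Fin.succ (Fin.succ (Fin.succ ⟨0, by omega⟩)))
    rw [MM03] at h
    simp only [Pi.add_apply, Pi.sub_apply, Pi.smul_apply, Pi.neg_apply, Pi.zero_apply,
      Matrix.zero_apply, smul_eq_mul] at h
    have h' : (s - 1) / t = 0 := by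
      field_simp at h ⊢
      linarith
    rcases div_eq_zero_iff.1 h' with h' | h' <;> linarith
  · subst h
    intro X hX
    obtain ⟨a1, a2, b1, b2, c, rfl⟩ := exMM X hX
    simp only [f1_MM, pMbr_MM, Ust_MM, smul_MM, add_MM, sub_MM]
    rw [← zero_MM]
    apply MM_congr <;> intros <;> simp <;> ring
  · intro X hX
    obtain ⟨a1, a2, b1, b2, c, rfl⟩ := exMM X hX
    simp only [f2_MM, pMbr_MM, Ust_MM, smul_MM, add_MM, sub_MM]
    rw [← zero_MM]
    apply MM_congr <;> intros <;> simp
  · intro X hX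
    obtain ⟨a1, a2, b1, b2, c, rfl⟩ := exMM X hX
    simp only [f3_MM, pMbr_MM, Ust_MM, smul_MM, add_MM, sub_MM]
    rw [← zero_MM]
    apply MM_congr <;> intros <;> simp
end

section
/- Consider SO(n)/SO(2)×SO(n−3) as a 6-symmetric space with canonical f-structure f₄ = (1/√3)(θ² − θ⁴). For no pair s, t > 0 does f₄ satisfy the NKf condition for (s,t); that is, for every s, t > 0 there exists X ∈ 𝔪 with (1/2)[f₄X, f₄²X]_𝔪 + U_{s,t}(f₄X, f₄²X) − f₄(U_{s,t}(f₄X, f₄X)) ≠ 0. In other words, f₄ is not a nearly Kähler f-structure with respect to any invariant Riemannian metric. -/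
open Matrix

open FlagMfld

namespace FlagMfld

variable {m : ℕ}

lemma sum4 (f : Fin (m+4) → ℝ) :
    ∑ k, f k = f 0 + (f 1 + (f 2 + ∑ k : Fin (m+1), f k.succ.succ.succ)) := by
  rw [Fin.sum_univ_succ, Fin.sum_univ_succ, Fin.sum_univ_succ]
  rfl

lemma v2 : ((2 : Fin (m+4)) : ℕ) = 2 := rfl
lemma w2 : 2 % (m+4) = 2 := Nat.mod_eq_of_lt (by omega)
lemma z2 : (2 : Fin (m+4)) ≠ 0 := fun h => by
  have := congrArg Fin.val h
  rw [v2] at this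
  simp at this

lemma L0 (X : Matrix (Fin (m+4)) (Fin (m+4)) ℝ) (j) : (B6 * X : Matrix (Fin (m+4)) (Fin (m+4)) ℝ) 0 j = X 0 j := by
  rw [Matrix.mul_apply, sum4]; simp [B6, w2, z2]

lemma L1 (X : Matrix (Fin (m+4)) (Fin (m+4)) ℝ) (j) :
    (B6 * X : Matrix (Fin (m+4)) (Fin (m+4)) ℝ) 1 j = 1/2 * X 1 j + √3/2 * X 2 j := by
  rw [Matrix.mul_apply, sum4]; simp [B6, w2, z2]

lemma L2 (X : Matrix (Fin (m+4)) (Fin (m+4)) ℝ) (j) :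
    (B6 * X : Matrix (Fin (m+4)) (Fin (m+4)) ℝ) 2 j = -(√3/2) * X 1 j + 1/2 * X 2 j := by
  rw [Matrix.mul_apply, sum4]; simp [B6, w2, z2]

lemma L3 (X : Matrix (Fin (m+4)) (Fin (m+4)) ℝ) (i : Fin (m+1)) (j) :
    (B6 * X : Matrix (Fin (m+4)) (Fin (m+4)) ℝ) i.succ.succ.succ j = -X i.succ.succ.succ j := by
  rw [Matrix.mul_apply, sum4]; simp [B6, w2, z2]
  rw [if_neg (fun h => by have := congrArg Fin.val h; simp at this),
    if_neg (fun h => by have := congrArg Fin.val h; rw [v2] at this; simp at this)]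
  simp

lemma th_eq (X : Matrix (Fin (m+4)) (Fin (m+4)) ℝ) (i j) :
    th6 X i j = (B6 * (B6 * X)ᵀ : Matrix (Fin (m+4)) (Fin (m+4)) ℝ) j i := by
  have : th6 X = (B6 * (B6 * X)ᵀ)ᵀ := by
    simp [th6, Matrix.transpose_mul, Matrix.mul_assoc]
  rw [this]; rfl

lemma f00 (X : Matrix (Fin (m+4)) (Fin (m+4)) ℝ) : f4 X 0 0 = 0 := by
  simp only [f4, th_eq, L0, Matrix.transpose_apply, Matrix.smul_apply,
    Matrix.sub_apply, smul_eq_mul]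
  ring

lemma f03 (X : Matrix (Fin (m+4)) (Fin (m+4)) ℝ) (j : Fin (m+1)) :
    f4 X 0 j.succ.succ.succ = 0 := by
  simp only [f4, th_eq, L0, L3, Matrix.transpose_apply, Matrix.smul_apply,
    Matrix.sub_apply, smul_eq_mul]
  ring

lemma f30 (X : Matrix (Fin (m+4)) (Fin (m+4)) ℝ) (j : Fin (m+1)) :
    f4 X j.succ.succ.succ 0 = 0 := by
  simp only [f4, th_eq, L0, L3, Matrix.transpose_apply, Matrix.smul_apply,
    Matrix.sub_apply, smul_eq_mul]
  ring

lemma f33 (X : Matrix (Fin (m+4)) (Fin (m+4)) ℝ) (i j : Fin (m+1)) :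
    f4 X i.succ.succ.succ j.succ.succ.succ = 0 := by
  simp only [f4, th_eq, L3, Matrix.transpose_apply, Matrix.smul_apply,
    Matrix.sub_apply, smul_eq_mul]
  ring

lemma s3 : √3 ^ 2 = (3:ℝ) := Real.sq_sqrt (by norm_num)
lemma s3' : √3 ^ 3 = (3:ℝ) * √3 := by rw [pow_succ, s3]
lemma s4 : √3 ^ 4 = (9:ℝ) := by rw [show √3 ^ 4 = (√3^2)^2 by ring, s3]; norm_num
lemma sn : √3 ≠ (0:ℝ) := by positivity

lemma f01 (X : Matrix (Fin (m+4)) (Fin (m+4)) ℝ) : f4 X 0 1 = X 0 2 := by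
  simp only [f4, th_eq, L0, L1, L2, Matrix.transpose_apply, Matrix.smul_apply,
    Matrix.sub_apply, smul_eq_mul]
  have := sn
  field_simp
  ring_nf
  simp only [s3, s3', s4]
  ring

lemma f02 (X : Matrix (Fin (m+4)) (Fin (m+4)) ℝ) : f4 X 0 2 = -X 0 1 := by
  simp only [f4, th_eq, L0, L1, L2, Matrix.transpose_apply, Matrix.smul_apply,
    Matrix.sub_apply, smul_eq_mul]
  have := sn
  field_simp
  ring_nf
  simp only [s3, s3', s4]
  ring

lemma f13 (X : Matrix (Fin (m+4)) (Fin (m+4)) ℝ) (j : Fin (m+1)) :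
    f4 X 1 j.succ.succ.succ = X 2 j.succ.succ.succ := by
  simp only [f4, th_eq, L3, L1, L2, Matrix.transpose_apply, Matrix.smul_apply,
    Matrix.sub_apply, smul_eq_mul]
  have := sn
  field_simp
  ring_nf
  simp only [s3, s3', s4]
  ring

lemma f23 (X : Matrix (Fin (m+4)) (Fin (m+4)) ℝ) (j : Fin (m+1)) :
    f4 X 2 j.succ.succ.succ = -X 1 j.succ.succ.succ := by
  simp only [f4, th_eq, L3, L1, L2, Matrix.transpose_apply, Matrix.smul_apply,
    Matrix.sub_apply, smul_eq_mul]
  have := sn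
  field_simp
  ring_nf
  simp only [s3, s3', s4]
  ring

lemma ge3 (i : Fin (m+4)) (h : 3 ≤ i.val) : ∃ k : Fin (m+1), i = k.succ.succ.succ :=
  ⟨⟨i.val - 3, by omega⟩, by ext; simp; omega⟩

lemma p3f (X : Matrix (Fin (m+4)) (Fin (m+4)) ℝ) : p3 (f4 X) = 0 := by
  ext i j
  simp only [p3, Matrix.of_apply, Matrix.zero_apply]
  split_ifs with h
  · rcases h with ⟨h0, h3⟩ | ⟨h0, h3⟩
    · obtain ⟨k, rfl⟩ := ge3 _ h3
      obtain rfl : i = 0 := Fin.ext h0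
      exact f03 X k
    · obtain ⟨k, rfl⟩ := ge3 _ h3
      obtain rfl : j = 0 := Fin.ext h0
      exact f30 X k
  · rfl

/-- test vector -/
def X0 : Matrix (Fin (m+4)) (Fin (m+4)) ℝ := Matrix.of fun i j =>
  if i.val = 0 ∧ j.val = 1 then 1 else if i.val = 1 ∧ j.val = 0 then -1
  else if i.val = 2 ∧ j.val = 3 then 1 else if i.val = 3 ∧ j.val = 2 then -1 else 0

lemma X0M : inM (X0 (m := m)) := by
  refine ⟨?_, ?_, ?_⟩
  · ext i j
    simp only [X0, Matrix.transpose_apply, Matrix.neg_apply, Matrix.of_apply]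
    split_ifs <;> first | omega | norm_num
  · intro i j h1 h2
    simp only [X0, Matrix.of_apply]
    split_ifs <;> first | omega | rfl
  · intro i j h1 h2
    simp only [X0, Matrix.of_apply]
    split_ifs <;> first | omega | rfl

lemma br03 (X Y : Matrix (Fin (m+4)) (Fin (m+4)) ℝ) (j : Fin (m+1)) :
    br (f4 X) (f4 Y) 0 j.succ.succ.succ =
      f4 X 0 1 * f4 Y 1 j.succ.succ.succ
      + f4 X 0 2 * f4 Y 2 j.succ.succ.succ
      - (f4 Y 0 1 * f4 X 1 j.succ.succ.succ
      + f4 Y 0 2 * f4 X 2 j.succ.succ.succ) := by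
  rw [br, Matrix.sub_apply, Matrix.mul_apply, Matrix.mul_apply, sum4, sum4]
  simp only [f00, f03, f33]
  simp

lemma brp03 (X Y : Matrix (Fin (m+4)) (Fin (m+4)) ℝ) (j : Fin (m+1)) :
    br (p1 X) (p2 Y) 0 j.succ.succ.succ =
      X 0 1 * Y 1 j.succ.succ.succ
      + X 0 2 * Y 2 j.succ.succ.succ := by
  rw [br, Matrix.sub_apply, Matrix.mul_apply, Matrix.mul_apply, sum4, sum4]
  simp [p1, p2, v2]

lemma br0 (X : Matrix (Fin (m+4)) (Fin (m+4)) ℝ) : br X 0 = 0 := by simp [br]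

end FlagMfld

/-- On the 6-symmetric space `SO(n)/SO(2)×SO(n-3)`, `f₄` is not a nearly
Kähler f-structure for any `s, t > 0`: for every `s,t > 0` there is `X ∈ 𝔪` at which the
NKf condition fails. -/
theorem statement18 (n : ℕ) (hn : 4 ≤ n) (s t : ℝ) (hs : 0 < s) (ht : 0 < t) :
    ∃ X : Matrix (Fin n) (Fin n) ℝ, inM X ∧
      (1 / 2 : ℝ) • pM (br (f4 X) (f4 (f4 X))) + Ust s t (f4 X) (f4 (f4 X)) -
        f4 (Ust s t (f4 X) (f4 X)) ≠ 0 := by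
  obtain ⟨m, rfl⟩ : ∃ m, n = m + 4 := ⟨n - 4, by omega⟩
  refine ⟨X0, X0M, fun h => ?_⟩
  have h := congrFun (congrFun h 0) (0 : Fin (m+1)).succ.succ.succ
  have hp : ∀ Z : Matrix (Fin (m+4)) (Fin (m+4)) ℝ,
      pM Z 0 (0 : Fin (m+1)).succ.succ.succ = Z 0 (0 : Fin (m+1)).succ.succ.succ := by
    intro Z; simp [pM]
  rw [Matrix.sub_apply, Matrix.add_apply, f03, Matrix.smul_apply, hp, br03] at h
  simp only [Ust, p3f, br0, Matrix.add_apply, Matrix.smul_apply, brp03, f01, f02, f13, f23] at h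
  simp [X0, v2] at h
end

section
/- Consider SO(n)/SO(2)×SO(n−3) as a 6-symmetric space with canonical f-structures f₁, f₂, f₃, f₄. For every s, t > 0, each f ∈ {f₁, f₂, f₃, f₄} satisfies the G₁f condition for (s,t): f(2·U_{s,t}(fX, f²X) − f(U_{s,t}(fX, fX)) + f(U_{s,t}(f²X, f²X))) = 0 for all X ∈ 𝔪. In other words, f₁, f₂, f₃, f₄ are G₁f-structures with respect to every invariant Riemannian metric. -/
open Matrix

open FlagMfld

namespace FlagAux

variable {n : ℕ}

lemma B6_mul_outer (X : Matrix (Fin n) (Fin n) ℝ) (i j : Fin n)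
    (h : i.val = 0 ∨ 3 ≤ i.val) :
    (B6 * X : Matrix (Fin n) (Fin n) ℝ) i j = (if i.val = 0 then 1 else -1) * X i j := by
  rw [Matrix.mul_apply, Finset.sum_eq_single i]
  · congr 1
    simp only [B6, Matrix.of_apply]
    split_ifs <;> first | rfl | omega | (exfalso; simp_all <;> omega)
  · intro k _ hk
    have hk' : i.val ≠ k.val := fun e => hk (Fin.ext e.symm)
    have : B6 i k = (0 : ℝ) := by
      simp only [B6, Matrix.of_apply, Fin.ext_iff]
      split_ifs <;> first | rfl | omega
    rw [this, zero_mul]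
  · simp

lemma mul_B6T_outer (X : Matrix (Fin n) (Fin n) ℝ) (i j : Fin n)
    (h : j.val = 0 ∨ 3 ≤ j.val) :
    (X * B6ᵀ : Matrix (Fin n) (Fin n) ℝ) i j = (if j.val = 0 then 1 else -1) * X i j := by
  have e : (X * B6ᵀ) = (B6 * Xᵀ)ᵀ := by simp [Matrix.transpose_mul]
  rw [e, Matrix.transpose_apply, B6_mul_outer _ _ _ h, Matrix.transpose_apply]

lemma B6_mul_inner (X : Matrix (Fin n) (Fin n) ℝ) (i j : Fin n)
    (h : i.val = 1 ∨ i.val = 2) (hX : ∀ k : Fin n, k.val = 1 ∨ k.val = 2 → X k j = 0) :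
    (B6 * X : Matrix (Fin n) (Fin n) ℝ) i j = 0 := by
  rw [Matrix.mul_apply]
  apply Finset.sum_eq_zero
  intro k _
  by_cases hk : k.val = 1 ∨ k.val = 2
  · rw [hX k hk, mul_zero]
  · have : B6 i k = (0 : ℝ) := by
      simp only [B6, Matrix.of_apply, Fin.ext_iff]
      split_ifs <;> first | rfl | omega
    rw [this, zero_mul]

def pos3 (i j : Fin n) : Prop := (i.val = 0 ∧ 3 ≤ j.val) ∨ (j.val = 0 ∧ 3 ≤ i.val)

def sup3 (Y : Matrix (Fin n) (Fin n) ℝ) : Prop := ∀ i j, ¬ pos3 i j → Y i j = 0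

lemma th6_pos3 (X : Matrix (Fin n) (Fin n) ℝ) (i j : Fin n) (h : pos3 i j) :
    th6 X i j = - X i j := by
  unfold pos3 at h
  rw [th6, mul_B6T_outer _ _ _ (by omega), B6_mul_outer _ _ _ (by omega)]
  split_ifs <;> first | omega | ring

lemma th6_sup3 (Y : Matrix (Fin n) (Fin n) ℝ) (hY : sup3 Y) : th6 Y = -Y := by
  ext i j
  by_cases h : pos3 i j
  · rw [th6_pos3 _ _ _ h, Matrix.neg_apply]
  have hz := hY i j h
  rw [Matrix.neg_apply, hz, neg_zero]
  have hB : ∀ k l : Fin n, (l.val = 1 ∨ l.val = 2) → (B6 * Y : Matrix (Fin n) (Fin n) ℝ) k l = 0 := by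
    intro k l hl
    rw [Matrix.mul_apply]
    apply Finset.sum_eq_zero
    intro m _
    rw [hY m l (by unfold pos3; omega), mul_zero]
  by_cases hj : j.val = 1 ∨ j.val = 2
  · have e : th6 Y = (B6 * (B6 * Y)ᵀ)ᵀ := by simp [th6, Matrix.transpose_mul, Matrix.mul_assoc]
    rw [e, Matrix.transpose_apply]
    exact B6_mul_inner _ _ _ hj (fun k hk => hB _ _ hk)
  · rw [th6, mul_B6T_outer _ _ _ (by omega)]
    by_cases hi : i.val = 1 ∨ i.val = 2
    · rw [B6_mul_inner _ _ _ hi (fun k hk => hY k j (by unfold pos3; omega)), mul_zero]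
    · rw [B6_mul_outer _ _ _ (by omega), hz]; simp

lemma th6_neg (X : Matrix (Fin n) (Fin n) ℝ) : th6 (-X) = - th6 X := by simp [th6]

lemma th6_zero : th6 (0 : Matrix (Fin n) (Fin n) ℝ) = 0 := by simp [th6]

lemma p3_zero (Z : Matrix (Fin n) (Fin n) ℝ) (h : ∀ i j, pos3 i j → Z i j = 0) : p3 Z = 0 := by
  ext i j
  simp only [p3, Matrix.of_apply, Matrix.zero_apply]
  split_ifs with hh
  · exact h i j hh
  · rfl

lemma mul12 (X Y : Matrix (Fin n) (Fin n) ℝ) : sup3 (p1 X * p2 Y) := by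
  intro i j h
  unfold pos3 at h
  rw [Matrix.mul_apply]
  apply Finset.sum_eq_zero
  intro k _
  simp only [p1, p2, Matrix.of_apply]
  split_ifs <;> first | omega | simp

lemma mul21 (X Y : Matrix (Fin n) (Fin n) ℝ) : sup3 (p2 Y * p1 X) := by
  intro i j h
  unfold pos3 at h
  rw [Matrix.mul_apply]
  apply Finset.sum_eq_zero
  intro k _
  simp only [p1, p2, Matrix.of_apply]
  split_ifs <;> first | omega | simp

lemma Ust_sup3 (s t : ℝ) (X Y : Matrix (Fin n) (Fin n) ℝ) (hX : p3 X = 0) (hY : p3 Y = 0) :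
    sup3 (Ust s t X Y) := by
  intro i j h
  simp [Ust, hX, hY, br, mul12 X Y i j h, mul12 Y X i j h, mul21 X Y i j h, mul21 Y X i j h]

lemma g1_of (s t : ℝ) (f : Matrix (Fin n) (Fin n) ℝ → Matrix (Fin n) (Fin n) ℝ)
    (h1 : ∀ X, p3 (f X) = 0) (h2 : ∀ Y, sup3 Y → f Y = 0) : g1Cond s t f := by
  intro X _
  rw [h2 _ (Ust_sup3 s t _ _ (h1 X) (h1 X)), h2 _ (Ust_sup3 s t _ _ (h1 (f X)) (h1 (f X)))]
  apply h2
  intro i j h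
  simp [Ust_sup3 s t _ _ (h1 X) (h1 (f X)) i j h]

end FlagAux

open FlagAux

/-- On the 6-symmetric space `SO(n)/SO(2)×SO(n-3)`, each of
`f₁, f₂, f₃, f₄` is a `G₁f`-structure with respect to every invariant Riemannian metric. -/
theorem statement19 (n : ℕ) (hn : 4 ≤ n) (s t : ℝ) (hs : 0 < s) (ht : 0 < t) :
    g1Cond (n := n) s t f1 ∧
    g1Cond (n := n) s t f2 ∧
    g1Cond (n := n) s t f3 ∧
    g1Cond (n := n) s t f4 := by
  refine ⟨g1_of s t _ ?_ ?_, g1_of s t _ ?_ ?_, g1_of s t _ ?_ ?_, g1_of s t _ ?_ ?_⟩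
  · exact fun X => p3_zero _ fun i j h => by simp [f1, th6_pos3 _ i j h]
  · exact fun Y h => by simp [f1, th6_sup3 Y h, th6_neg]
  · exact fun X => p3_zero _ fun i j h => by simp [f2, th6_pos3 _ i j h]
  · exact fun Y h => by simp [f2, th6_sup3 Y h, th6_neg]
  · exact fun X => p3_zero _ fun i j h => by simp [f3, th6_pos3 _ i j h]
  · exact fun Y h => by simp [f3, th6_sup3 Y h, th6_neg]
  · exact fun X => p3_zero _ fun i j h => by simp [f4, th6_pos3 _ i j h]
  · exact fun Y h => by simp [f4, th6_sup3 Y h, th6_neg]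
end
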